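/- Minimax lower bound with Gaussian reward models (instantiation of Theorem 3): Let ν be a probability measure on a measurable space X, let σ > 0, let n ≥ 1 be an integer, and let m₁, m₂ : X → ℝ be ν-integrable measurable functions with ∫ (m₁ − m₂)² dν ≤ 2σ²/n. Let Pᵢ = ν ⊗ κᵢ be the joint distribution on X × ℝ where κᵢ is the Markov kernel sending x to N(mᵢ(x), σ²). Then for every measurable estimator v̂ : (X × ℝ)ⁿ → ℝ computed from n i.i.d. samples, max over i ∈ {1,2} of ∫ (v̂ − ∫ mᵢ dν)² dPᵢ^{⊗n} ≥ (∫ (m₁ − m₂) dν)² / (16e). -/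

import Mathlib

open MeasureTheory ProbabilityTheory
open scoped ENNReal

/-!
Write `P`, `Q` for the joint laws of the two samples and `p`, `q` for their densities. The
covariates contribute nothing to the Kullback–Leibler divergence, and `N(a, v)` and `N(b, v)` are
at divergence `(a - b)² / (2v)`, so the closeness hypothesis says exactly that `KL(P ‖ Q) ≤ 1`.

By Cauchy–Schwarz, `(t - θ₁)² p + (t - θ₂)² q ≥ (θ₁ - θ₂)² pq / (p + q)` for every value `t` of the
estimator, so the sum of the two risks is at least `(θ₁ - θ₂)² ∫ pq / (p + q)`. Jensen's inequality
bounds the last integral below by `exp (-KL(P ‖ Q)) / 2`: it is the `P`-mean of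
`exp (-log (p / q) - log ((1 + q / p) / 2)) / 2`, and `log ((1 + q / p) / 2)` has `P`-mean at most
zero.
-/

open InformationTheory
open scoped NNReal

section KullbackLeibler

variable {α β : Type*} [MeasurableSpace α] [MeasurableSpace β]

lemma klDiv_map_measurableEquiv (μ ν : Measure α) [IsFiniteMeasure μ] [IsFiniteMeasure ν]
    (e : α ≃ᵐ β) : klDiv (μ.map e) (ν.map e) = klDiv μ ν := by
  refine le_antisymm (klDiv_map_le μ ν e.measurable) ?_
  simpa only [e.map_symm_map] using klDiv_map_le (μ.map e) (ν.map e) e.symm.measurable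

lemma klDiv_prod (μ μ' : Measure α) (ν ν' : Measure β) [IsProbabilityMeasure μ]
    [IsFiniteMeasure μ'] [IsProbabilityMeasure ν] [IsProbabilityMeasure ν'] :
    klDiv (μ.prod ν) (μ'.prod ν') = klDiv μ μ' + klDiv ν ν' := by
  have common_left : klDiv (μ.prod ν) (μ.prod ν') = klDiv ν ν' := by
    rw [← klDiv_map_measurableEquiv _ _ MeasurableEquiv.prodComm]
    simpa only [Measure.compProd_const, MeasurableEquiv.prodComm, MeasurableEquiv.coe_mk,
      Equiv.coe_prodComm, Measure.prod_swap] using klDiv_compProd_left ν ν' (Kernel.const β μ)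
  simpa only [Measure.compProd_const, common_left]
    using klDiv_compProd_eq_add μ μ' (Kernel.const α ν) (Kernel.const α ν')

lemma klDiv_pi_fin {n : ℕ} {γ : Fin n → Type*} [∀ i, MeasurableSpace (γ i)]
    (P Q : ∀ i, Measure (γ i)) [∀ i, IsProbabilityMeasure (P i)]
    [∀ i, IsProbabilityMeasure (Q i)] :
    klDiv (Measure.pi P) (Measure.pi Q) = ∑ i, klDiv (P i) (Q i) := by
  induction n with
  | zero =>
    obtain rfl : P = Q := Subsingleton.elim P Q
    rw [klDiv_self, Finset.univ_eq_empty, Finset.sum_empty]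
  | succ n ih =>
    rw [← klDiv_map_measurableEquiv _ _ (MeasurableEquiv.piFinSuccAbove γ 0),
      (measurePreserving_piFinSuccAbove P 0).map_eq, (measurePreserving_piFinSuccAbove Q 0).map_eq,
      klDiv_prod, ih, Fin.sum_univ_succAbove _ 0]

lemma klDiv_pi {ι : Type*} [Fintype ι] {γ : ι → Type*} [∀ i, MeasurableSpace (γ i)]
    (P Q : ∀ i, Measure (γ i)) [∀ i, IsProbabilityMeasure (P i)]
    [∀ i, IsProbabilityMeasure (Q i)] :
    klDiv (Measure.pi P) (Measure.pi Q) = ∑ i, klDiv (P i) (Q i) := by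
  let e := (Fintype.equivFin ι).symm
  rw [← (measurePreserving_piCongrLeft P e).map_eq, ← (measurePreserving_piCongrLeft Q e).map_eq,
    klDiv_map_measurableEquiv, klDiv_pi_fin, e.sum_comp fun i ↦ klDiv (P i) (Q i)]

lemma rnDeriv_compProd_right [MeasurableSpace.CountableOrCountablyGenerated α β]
    (μ : Measure α) [IsFiniteMeasure μ] {κ η : Kernel α β} [IsFiniteKernel κ] [IsFiniteKernel η]
    (h_ac : ∀ᵐ a ∂μ, κ a ≪ η a) :
    (μ ⊗ₘ κ).rnDeriv (μ ⊗ₘ η) =ᵐ[μ ⊗ₘ η] fun p ↦ κ.rnDeriv η p.1 p.2 := by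
  have h_density : μ ⊗ₘ κ = (μ ⊗ₘ η).withDensity fun p ↦ κ.rnDeriv η p.1 p.2 := by
    rw [← Measure.compProd_withDensity (κ.measurable_rnDeriv η)]
    refine Measure.compProd_congr ?_
    filter_upwards [h_ac] with a ha using (Kernel.withDensity_rnDeriv_eq ha).symm
  rw [h_density]
  exact Measure.rnDeriv_withDensity _ (κ.measurable_rnDeriv η)

lemma klDiv_compProd_right_of_ac [MeasurableSpace.CountableOrCountablyGenerated α β]
    (μ : Measure α) [IsFiniteMeasure μ] {κ η : Kernel α β} [IsFiniteKernel κ] [IsFiniteKernel η]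
    (h_ac : ∀ᵐ a ∂μ, κ a ≪ η a) :
    klDiv (μ ⊗ₘ κ) (μ ⊗ₘ η) = ∫⁻ a, klDiv (κ a) (η a) ∂μ :=
  calc klDiv (μ ⊗ₘ κ) (μ ⊗ₘ η)
    _ = ∫⁻ p, ENNReal.ofReal (klFun (κ.rnDeriv η p.1 p.2).toReal) ∂(μ ⊗ₘ η) := by
      rw [klDiv_eq_lintegral_klFun_of_ac (Measure.AbsolutelyContinuous.compProd_right h_ac)]
      refine lintegral_congr_ae ?_
      filter_upwards [rnDeriv_compProd_right μ h_ac] with p hp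
      rw [hp]
    _ = ∫⁻ a, ∫⁻ b, ENNReal.ofReal (klFun (κ.rnDeriv η a b).toReal) ∂(η a) ∂μ :=
      Measure.lintegral_compProd (by fun_prop)
    _ = ∫⁻ a, klDiv (κ a) (η a) ∂μ := by
      refine lintegral_congr_ae ?_
      filter_upwards [h_ac] with a ha
      rw [klDiv_eq_lintegral_klFun_of_ac ha]
      refine lintegral_congr_ae ?_
      filter_upwards [Kernel.rnDeriv_eq_rnDeriv_measure (κ := κ) (η := η) (a := a)] with b hb
      rw [hb]

lemma klDiv_compProd_right [MeasurableSpace.CountableOrCountablyGenerated α β]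
    (μ : Measure α) [IsFiniteMeasure μ] (κ η : Kernel α β) [IsFiniteKernel κ] [IsFiniteKernel η] :
    klDiv (μ ⊗ₘ κ) (μ ⊗ₘ η) = ∫⁻ a, klDiv (κ a) (η a) ∂μ := by
  by_cases h_ac : ∀ᵐ a ∂μ, κ a ≪ η a
  · exact klDiv_compProd_right_of_ac μ h_ac
  let S := {a | ¬ κ a ≪ η a}
  have hS : MeasurableSet S := (Kernel.measurableSet_absolutelyContinuous κ η).compl
  rw [klDiv_of_not_ac (mt Measure.absolutelyContinuous_compProd_right_iff.mp h_ac), eq_comm,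
    eq_top_iff]
  calc ∞
    _ = ∞ * μ S := (ENNReal.top_mul fun hS_null ↦ h_ac (ae_iff.mpr hS_null)).symm
    _ = ∫⁻ a in S, klDiv (κ a) (η a) ∂μ := by
      rw [← setLIntegral_const]
      exact setLIntegral_congr_fun hS fun a ha ↦ (klDiv_of_not_ac ha).symm
    _ ≤ ∫⁻ a, klDiv (κ a) (η a) ∂μ := setLIntegral_le_lintegral _ _

end KullbackLeibler

section Gaussian

lemma gaussianReal_absolutelyContinuous_gaussianReal (a b : ℝ) {v w : ℝ≥0} (hv : v ≠ 0)
    (hw : w ≠ 0) : gaussianReal a v ≪ gaussianReal b w :=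
  (gaussianReal_absolutelyContinuous a hv).trans (gaussianReal_absolutelyContinuous' b hw)

lemma llr_gaussianReal (a b : ℝ) {v : ℝ≥0} (hv : v ≠ 0) :
    llr (gaussianReal a v) (gaussianReal b v) =ᵐ[gaussianReal a v]
      fun x ↦ (a - b) / v * (x - a) + (a - b) ^ 2 / (2 * v) := by
  have h_ac := gaussianReal_absolutelyContinuous a hv
  filter_upwards [h_ac.ae_le (rnDeriv_gaussianReal a v), h_ac.ae_le (rnDeriv_gaussianReal b v),
    (gaussianReal_absolutelyContinuous_gaussianReal a b hv hv).ae_le (Measure.rnDeriv_eq_div h_ac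
      (gaussianReal_absolutelyContinuous b hv))] with x ha hb h_div
  rw [llr, h_div, ha, hb, ENNReal.toReal_div, toReal_gaussianPDF, toReal_gaussianPDF,
    Real.log_div (gaussianPDFReal_pos a v x hv).ne' (gaussianPDFReal_pos b v x hv).ne']
  have h_sqrt : (√(2 * Real.pi * v))⁻¹ ≠ 0 := by positivity
  simp only [gaussianPDFReal, Real.log_mul h_sqrt (Real.exp_ne_zero _), Real.log_exp]
  field_simp
  ring

lemma klDiv_gaussianReal (a b : ℝ) {v : ℝ≥0} (hv : v ≠ 0) :
    klDiv (gaussianReal a v) (gaussianReal b v) = ENNReal.ofReal ((a - b) ^ 2 / (2 * v)) := by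
  have h_id : Integrable (fun x ↦ x) (gaussianReal a v) :=
    (memLp_id_gaussianReal 1).integrable le_rfl
  have h_centered : Integrable (fun x ↦ x - a) (gaussianReal a v) := h_id.sub (integrable_const a)
  have h_linear := h_centered.const_mul ((a - b) / v)
  have h_mean : ∫ x, (x - a) ∂(gaussianReal a v) = 0 := by
    simp [integral_sub h_id (integrable_const a), integral_id_gaussianReal]
  have h_int : Integrable (llr (gaussianReal a v) (gaussianReal b v)) (gaussianReal a v) :=
    (integrable_congr (llr_gaussianReal a b hv)).mpr (h_linear.add (integrable_const _))
  rw [klDiv_of_ac_of_integrable (gaussianReal_absolutelyContinuous_gaussianReal a b hv hv) h_int,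
    integral_congr_ae (llr_gaussianReal a b hv), integral_add h_linear (integrable_const _),
    integral_const_mul, h_mean]
  simp

end Gaussian

section TwoPoint

-- Twice the right-hand side is `exp (-ℓ - log ((1 + exp (-ℓ)) / 2))`; the left-hand side bounds
-- that exponential by its tangent at `-K`, and the logarithm by its tangent at `1`.
lemma exp_neg_div_two_mul_le_exp_neg_div_one_add (ℓ K : ℝ) :
    Real.exp (-K) / 2 * (1 + (K - ℓ) - (Real.exp (-ℓ) - 1) / 2)
      ≤ Real.exp (-ℓ) / (1 + Real.exp (-ℓ)) := by
  have h_mid : 0 < (1 + Real.exp (-ℓ)) / 2 := by positivity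
  have h_log := Real.log_le_sub_one_of_pos h_mid
  have h_exp := Real.add_one_le_exp (K - ℓ - Real.log ((1 + Real.exp (-ℓ)) / 2))
  calc Real.exp (-K) / 2 * (1 + (K - ℓ) - (Real.exp (-ℓ) - 1) / 2)
    _ ≤ Real.exp (-K) / 2 * Real.exp (K - ℓ - Real.log ((1 + Real.exp (-ℓ)) / 2)) := by
      gcongr
      linarith
    _ = Real.exp (-ℓ) / (1 + Real.exp (-ℓ)) := by
      rw [Real.exp_sub, Real.exp_log h_mid, sub_eq_add_neg, Real.exp_add, Real.exp_neg K]
      field_simp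

lemma sq_sub_mul_div_one_add_le (a b : ℝ) {w : ℝ} (hw : 0 ≤ w) :
    (a - b) ^ 2 * (w / (1 + w)) ≤ a ^ 2 + w * b ^ 2 := by
  rw [← mul_div_assoc, div_le_iff₀ (by positivity)]
  linarith [sq_nonneg (a + w * b)]

variable {Ω : Type*} [MeasurableSpace Ω] (P Q : Measure Ω)

lemma integrable_rnDeriv_div_one_add [IsFiniteMeasure P] :
    Integrable (fun x ↦ (Q.rnDeriv P x).toReal / (1 + (Q.rnDeriv P x).toReal)) P := by
  refine .of_bound (Measurable.aestronglyMeasurable (by fun_prop)) 1 (ae_of_all _ fun x ↦ ?_)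
  have h_nonneg : 0 ≤ (Q.rnDeriv P x).toReal := ENNReal.toReal_nonneg
  rw [Real.norm_of_nonneg (by positivity)]
  exact div_le_one_of_le₀ (by linarith) (by linarith)

variable [IsProbabilityMeasure P] [IsProbabilityMeasure Q]

lemma exp_neg_klDiv_div_two_le_integral (h_kl : klDiv P Q ≠ ∞) :
    Real.exp (-(klDiv P Q).toReal) / 2
      ≤ ∫ x, (Q.rnDeriv P x).toReal / (1 + (Q.rnDeriv P x).toReal) ∂P := by
  obtain ⟨h_ac, h_llr⟩ := klDiv_ne_top_iff.mp h_kl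
  set K := (klDiv P Q).toReal
  have h_mean : ∫ x, llr P Q x ∂P = K := (toReal_klDiv_of_measure_eq h_ac (by simp)).symm
  have h_w : Integrable (fun x ↦ (Q.rnDeriv P x).toReal) P := Measure.integrable_toReal_rnDeriv
  have h_mass : ∫ x, (Q.rnDeriv P x).toReal ∂P ≤ 1 := by
    rw [Measure.integral_toReal_rnDeriv', probReal_univ]
    exact sub_le_self _ measureReal_nonneg
  have h_gap : Integrable (fun x ↦ K - llr P Q x) P := (integrable_const _).sub h_llr
  have h_affine : Integrable (fun x ↦ 1 + (K - llr P Q x)) P := (integrable_const _).add h_gap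
  have h_excess : Integrable (fun x ↦ ((Q.rnDeriv P x).toReal - 1) / 2) P :=
    (h_w.sub (integrable_const _)).div_const _
  calc Real.exp (-K) / 2
    _ ≤ Real.exp (-K) / 2 * (1 - (∫ x, (Q.rnDeriv P x).toReal ∂P - 1) / 2) :=
      le_mul_of_one_le_right (by positivity) (by linarith)
    _ = ∫ x, Real.exp (-K) / 2 *
          (1 + (K - llr P Q x) - ((Q.rnDeriv P x).toReal - 1) / 2) ∂P := by
      rw [integral_const_mul, integral_sub h_affine h_excess,
        integral_add (integrable_const _) h_gap, integral_sub (integrable_const _) h_llr,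
        integral_div, integral_sub h_w (integrable_const _), h_mean]
      simp
    _ ≤ ∫ x, (Q.rnDeriv P x).toReal / (1 + (Q.rnDeriv P x).toReal) ∂P := by
      refine integral_mono_ae ((h_affine.sub h_excess).const_mul _)
        (integrable_rnDeriv_div_one_add P Q) ?_
      filter_upwards [exp_neg_llr h_ac] with x hx
      rw [← hx]
      exact exp_neg_div_two_mul_le_exp_neg_div_one_add _ K

lemma ofReal_sq_sub_mul_exp_neg_klDiv_le_add (h_kl : klDiv P Q ≠ ∞) {f : Ω → ℝ}
    (hf : Measurable f) (θ₁ θ₂ : ℝ) :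
    ENNReal.ofReal ((θ₁ - θ₂) ^ 2 / 2 * Real.exp (-(klDiv P Q).toReal))
      ≤ ∫⁻ x, ENNReal.ofReal ((f x - θ₁) ^ 2) ∂P + ∫⁻ x, ENNReal.ofReal ((f x - θ₂) ^ 2) ∂Q := by
  have h_int := (integrable_rnDeriv_div_one_add P Q).const_mul ((θ₁ - θ₂) ^ 2)
  calc ENNReal.ofReal ((θ₁ - θ₂) ^ 2 / 2 * Real.exp (-(klDiv P Q).toReal))
    _ ≤ ENNReal.ofReal (∫ x, (θ₁ - θ₂) ^ 2 *
          ((Q.rnDeriv P x).toReal / (1 + (Q.rnDeriv P x).toReal)) ∂P) := by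
      rw [integral_const_mul, div_mul_eq_mul_div, mul_div_assoc]
      gcongr
      exact exp_neg_klDiv_div_two_le_integral P Q h_kl
    _ = ∫⁻ x, ENNReal.ofReal ((θ₁ - θ₂) ^ 2 *
          ((Q.rnDeriv P x).toReal / (1 + (Q.rnDeriv P x).toReal))) ∂P :=
      ofReal_integral_eq_lintegral_ofReal h_int (ae_of_all _ fun x ↦ by positivity)
    _ ≤ ∫⁻ x, (ENNReal.ofReal ((f x - θ₁) ^ 2)
          + Q.rnDeriv P x * ENNReal.ofReal ((f x - θ₂) ^ 2)) ∂P := by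
      refine lintegral_mono_ae ?_
      filter_upwards [Q.rnDeriv_ne_top P] with x hx
      have h_sq := sq_sub_mul_div_one_add_le (f x - θ₁) (f x - θ₂)
        (ENNReal.toReal_nonneg (a := Q.rnDeriv P x))
      rw [sub_sub_sub_cancel_left, sub_sq_comm] at h_sq
      refine (ENNReal.ofReal_le_ofReal h_sq).trans_eq ?_
      rw [ENNReal.ofReal_add (by positivity) (by positivity),
        ENNReal.ofReal_mul ENNReal.toReal_nonneg, ENNReal.ofReal_toReal hx]
    _ = ∫⁻ x, ENNReal.ofReal ((f x - θ₁) ^ 2) ∂P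
          + ∫⁻ x, ENNReal.ofReal ((f x - θ₂) ^ 2) ∂(P.withDensity (Q.rnDeriv P)) := by
      rw [lintegral_add_left (by fun_prop), lintegral_withDensity_eq_lintegral_mul _
        (Q.measurable_rnDeriv P) (by fun_prop)]
      rfl
    _ ≤ _ := by
      gcongr
      exact Measure.withDensity_rnDeriv_le Q P

theorem two_point_risk_lower_bound {D : ℝ≥0} (h_kl : klDiv P Q ≤ D) {f : Ω → ℝ}
    (hf : Measurable f) (θ₁ θ₂ : ℝ) :
    ENNReal.ofReal ((θ₁ - θ₂) ^ 2 / 4 * Real.exp (-D))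
      ≤ max (∫⁻ x, ENNReal.ofReal ((f x - θ₁) ^ 2) ∂P)
        (∫⁻ x, ENNReal.ofReal ((f x - θ₂) ^ 2) ∂Q) := by
  have h_toReal : (klDiv P Q).toReal ≤ D := ENNReal.toReal_le_coe_of_le_coe h_kl
  refine (ENNReal.mul_le_mul_iff_right two_ne_zero ENNReal.ofNat_ne_top).mp ?_
  calc 2 * ENNReal.ofReal ((θ₁ - θ₂) ^ 2 / 4 * Real.exp (-D))
    _ = ENNReal.ofReal ((θ₁ - θ₂) ^ 2 / 2 * Real.exp (-D)) := by
      rw [← ENNReal.ofReal_ofNat, ← ENNReal.ofReal_mul zero_le_two]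
      ring_nf
    _ ≤ ENNReal.ofReal ((θ₁ - θ₂) ^ 2 / 2 * Real.exp (-(klDiv P Q).toReal)) := by gcongr
    _ ≤ _ := ofReal_sq_sub_mul_exp_neg_klDiv_le_add P Q (ne_top_of_le_ne_top (by simp) h_kl)
      hf θ₁ θ₂
    _ ≤ _ := by
      rw [two_mul]
      exact add_le_add (le_max_left _ _) (le_max_right _ _)

end TwoPoint

section GaussianRewards

variable {X : Type*} [MeasurableSpace X] (ν : Measure X) [IsProbabilityMeasure ν]
  {v : ℝ≥0} {m₁ m₂ : X → ℝ} {κ₁ κ₂ : Kernel X ℝ} [IsMarkovKernel κ₁] [IsMarkovKernel κ₂]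

lemma klDiv_pi_compProd_gaussianReal (hv : v ≠ 0) (n : ℕ)
    (hκ₁ : ∀ x, κ₁ x = gaussianReal (m₁ x) v) (hκ₂ : ∀ x, κ₂ x = gaussianReal (m₂ x) v) :
    klDiv (Measure.pi fun _ : Fin n ↦ ν ⊗ₘ κ₁) (Measure.pi fun _ : Fin n ↦ ν ⊗ₘ κ₂)
      = (n * ∫⁻ x, ENNReal.ofReal ((m₁ x - m₂ x) ^ 2) ∂ν) / (2 * v) := by
  have h_div (s : ℝ) : ENNReal.ofReal (s / (2 * v)) = ENNReal.ofReal s * (2 * v : ℝ≥0∞)⁻¹ := by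
    rw [ENNReal.ofReal_div_of_pos (by positivity), ENNReal.ofReal_mul zero_le_two,
      ENNReal.ofReal_ofNat, ENNReal.ofReal_coe_nnreal, div_eq_mul_inv]
  have h_inv : (2 * v : ℝ≥0∞)⁻¹ ≠ ∞ := by simpa using hv
  calc klDiv (Measure.pi fun _ : Fin n ↦ ν ⊗ₘ κ₁) (Measure.pi fun _ : Fin n ↦ ν ⊗ₘ κ₂)
    _ = n * ∫⁻ x, ENNReal.ofReal ((m₁ x - m₂ x) ^ 2 / (2 * v)) ∂ν := by
      simp only [klDiv_pi, klDiv_compProd_right, hκ₁, hκ₂, klDiv_gaussianReal _ _ hv,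
        Finset.sum_const, Finset.card_univ, Fintype.card_fin, nsmul_eq_mul]
    _ = (n * ∫⁻ x, ENNReal.ofReal ((m₁ x - m₂ x) ^ 2) ∂ν) / (2 * v) := by
      simp only [h_div]
      rw [lintegral_mul_const' _ _ h_inv, ← mul_assoc, ← div_eq_mul_inv]

theorem gaussian_minimax_lower_bound_general (hv : v ≠ 0) (n : ℕ) (D : ℝ≥0)
    (h_close : n * ∫⁻ x, ENNReal.ofReal ((m₁ x - m₂ x) ^ 2) ∂ν ≤ 2 * v * D)
    (hκ₁ : ∀ x, κ₁ x = gaussianReal (m₁ x) v) (hκ₂ : ∀ x, κ₂ x = gaussianReal (m₂ x) v)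
    {vhat : (Fin n → X × ℝ) → ℝ} (hvhat : Measurable vhat) (θ₁ θ₂ : ℝ) :
    ENNReal.ofReal ((θ₁ - θ₂) ^ 2 / 4 * Real.exp (-D))
      ≤ max
        (∫⁻ y, ENNReal.ofReal ((vhat y - θ₁) ^ 2) ∂(Measure.pi fun _ : Fin n ↦ ν ⊗ₘ κ₁))
        (∫⁻ y, ENNReal.ofReal ((vhat y - θ₂) ^ 2) ∂(Measure.pi fun _ : Fin n ↦ ν ⊗ₘ κ₂)) := by
  refine two_point_risk_lower_bound _ _ ?_ hvhat θ₁ θ₂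
  rw [klDiv_pi_compProd_gaussianReal ν hv n hκ₁ hκ₂]
  exact ENNReal.div_le_of_le_mul' h_close

end GaussianRewards

/-- Minimax lower bound with Gaussian reward models (instantiation of Theorem 3):
if the two hypotheses `Pᵢ = ν ⊗ₘ κᵢ` share the covariate marginal `ν` and have Gaussian
conditional reward distributions `N(mᵢ(x), σ²)` whose means satisfy
`∫ (m₁ − m₂)² dν ≤ 2σ²/n`, then no estimator `v̂` computed from `n` i.i.d. samples can
have squared-error risk smaller than `(∫ (m₁ − m₂) dν)²/(16e)` simultaneously under both
hypotheses, the target value of hypothesis `i` being the mean reward `∫ mᵢ dν`. -/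
theorem gaussian_minimax_lower_bound
    {X : Type*} [MeasurableSpace X] (ν : Measure X) [IsProbabilityMeasure ν]
    (σ : ℝ) (hσ : 0 < σ) (n : ℕ) (hn : 1 ≤ n)
    (m₁ m₂ : X → ℝ) (hm₁ : Measurable m₁) (hm₂ : Measurable m₂)
    (hm₁_int : Integrable m₁ ν) (hm₂_int : Integrable m₂ ν)
    (h_close : ∫⁻ x, ENNReal.ofReal ((m₁ x - m₂ x) ^ 2) ∂ν
      ≤ ENNReal.ofReal (2 * σ ^ 2 / n))
    (κ₁ κ₂ : Kernel X ℝ) [IsMarkovKernel κ₁] [IsMarkovKernel κ₂]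
    (hκ₁ : ∀ x, κ₁ x = gaussianReal (m₁ x) (σ ^ 2).toNNReal)
    (hκ₂ : ∀ x, κ₂ x = gaussianReal (m₂ x) (σ ^ 2).toNNReal)
    (vhat : (Fin n → X × ℝ) → ℝ) (hvhat : Measurable vhat) :
    ENNReal.ofReal ((∫ x, (m₁ x - m₂ x) ∂ν) ^ 2 / (16 * Real.exp 1))
      ≤ max
        (∫⁻ y, ENNReal.ofReal ((vhat y - ∫ x, m₁ x ∂ν) ^ 2)
          ∂(Measure.pi fun _ : Fin n => ν ⊗ₘ κ₁))
        (∫⁻ y, ENNReal.ofReal ((vhat y - ∫ x, m₂ x ∂ν) ^ 2)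
          ∂(Measure.pi fun _ : Fin n => ν ⊗ₘ κ₂)) := by
  have hv : (σ ^ 2).toNNReal ≠ 0 := by simpa using hσ.ne'
  have hn_ne : (n : ℝ) ≠ 0 := by positivity
  have h_budget : n * ∫⁻ x, ENNReal.ofReal ((m₁ x - m₂ x) ^ 2) ∂ν
      ≤ 2 * (σ ^ 2).toNNReal * (1 : ℝ≥0) :=
    calc n * ∫⁻ x, ENNReal.ofReal ((m₁ x - m₂ x) ^ 2) ∂ν
      _ ≤ n * ENNReal.ofReal (2 * σ ^ 2 / n) := by gcongr
      _ = ENNReal.ofReal (2 * σ ^ 2) := by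
        rw [← ENNReal.ofReal_natCast, ← ENNReal.ofReal_mul n.cast_nonneg, mul_div_cancel₀ _ hn_ne]
      _ = 2 * (σ ^ 2).toNNReal * (1 : ℝ≥0) := by
        rw [ENNReal.ofReal_mul zero_le_two, ENNReal.ofReal_ofNat, ENNReal.coe_one, mul_one]
        rfl
  refine le_trans (ENNReal.ofReal_le_ofReal ?_)
    (gaussian_minimax_lower_bound_general ν hv n 1 h_budget hκ₁ hκ₂ hvhat _ _)
  rw [integral_sub hm₁_int hm₂_int, NNReal.coe_one, Real.exp_neg, ← div_eq_mul_inv, div_div]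
  gcongr
  norm_num
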